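/- Fix an integer N ≥ 2 and n ≥ 1. Then ψ_{ρ_N}(n) = ε_{N,n}. In particular, since ε_{N,n} → 0 as n → ∞, the sequence of Rényi-type digits (a_n) is ψ-mixing under ρ_N. -/

import Mathlib

open MeasureTheory Set Real Filter

/-- The Rényi-type continued fraction map `R_N`. -/
noncomputable def RN (N : ℕ) (x : ℝ) : ℝ :=
  if x = 1 then 0 else (N : ℝ) / (1 - x) - ⌊(N : ℝ) / (1 - x)⌋

/-- `digit N k x` is the `(k+1)`-st digit `a_{k+1}(x)`. -/
noncomputable def digit (N k : ℕ) (x : ℝ) : ℤ :=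
  ⌊(N : ℝ) / (1 - (RN N)^[k] x)⌋

/-- The conditional probability measure `ρ^t_N`, with density
`N(N-1+t)/[N-(1-x)(1-t)]²` on `[0,1]`. -/
noncomputable def rhoT (N : ℕ) (t : ℝ) : Measure ℝ :=
  (volume.restrict (Set.Icc (0 : ℝ) 1)).withDensity fun x =>
    ENNReal.ofReal ((N : ℝ) * ((N : ℝ) - 1 + t) / ((N : ℝ) - (1 - x) * (1 - t)) ^ 2)

/-- The invariant probability measure `ρ_N`, with density
`(log(N/(N-1)))⁻¹/(x+N-1)` on `[0,1]`. -/
noncomputable def rhoN (N : ℕ) : Measure ℝ :=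
  (volume.restrict (Set.Icc (0 : ℝ) 1)).withDensity fun x =>
    ENNReal.ofReal ((Real.log ((N : ℝ) / ((N : ℝ) - 1)))⁻¹ / (x + (N : ℝ) - 1))

/-- `ε_{N,n}`. -/
noncomputable def eps (N n : ℕ) : ℝ :=
  sSup {r : ℝ | ∃ t ∈ Set.Icc (0 : ℝ) 1, ∃ C : Set ℝ, MeasurableSet C ∧
    0 < (rhoN N ((RN N)^[n - 1] ⁻¹' C)).toReal ∧
    r = |(rhoT N t ((RN N)^[n - 1] ⁻¹' C)).toReal
          / (rhoN N ((RN N)^[n - 1] ⁻¹' C)).toReal - 1|}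

/-- The ψ-mixing coefficient `ψ_μ(n)` of the digit sequence under `μ`. -/
noncomputable def psi (N : ℕ) (μ : Measure ℝ) (n : ℕ) : ℝ :=
  sSup {r : ℝ | ∃ k : ℕ, 1 ≤ k ∧ ∃ A B : Set ℝ,
    (∃ S : Set (Fin k → ℤ),
      A = {y | y ∈ Set.Icc (0 : ℝ) 1 ∧ Irrational y ∧ (fun j : Fin k => digit N j y) ∈ S}) ∧
    (∃ C : Set ℝ, MeasurableSet C ∧ B = (RN N)^[k + n - 1] ⁻¹' C) ∧
    (μ A).toReal * (μ B).toReal ≠ 0 ∧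
    r = |(μ (A ∩ B)).toReal / ((μ A).toReal * (μ B).toReal) - 1|}

/-- inverse branch with digit `N + i` -/
noncomputable def brn (N i : ℕ) (y : ℝ) : ℝ := 1 - (N : ℝ) / ((N : ℝ) + i + y)

/-- transition weights -/
noncomputable def wgt (N i : ℕ) (t : ℝ) : ℝ :=
  ((N : ℝ) - 1 + t) / (((N : ℝ) + i + t) * ((N : ℝ) + i + t - 1))

noncomputable def dT (N : ℕ) (t x : ℝ) : ℝ :=
  (N : ℝ) * ((N : ℝ) - 1 + t) / ((N : ℝ) - (1 - x) * (1 - t)) ^ 2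

noncomputable def dN (N : ℕ) (x : ℝ) : ℝ :=
  (Real.log ((N : ℝ) / ((N : ℝ) - 1)))⁻¹ / (x + (N : ℝ) - 1)

/-- first-digit set -/
def dg (N i : ℕ) : Set ℝ := {x | ⌊(N : ℝ) / (1 - x)⌋ = (N : ℤ) + i}

lemma castN {N : ℕ} (hN : 2 ≤ N) : (2 : ℝ) ≤ N := by exact_mod_cast hN

lemma meas_floor (N : ℕ) : Measurable (fun x : ℝ => ⌊(N : ℝ) / (1 - x)⌋) := by
  apply Int.measurable_floor.comp
  fun_prop

lemma meas_dg (N i : ℕ) : MeasurableSet (dg N i) :=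
  meas_floor N (measurableSet_singleton _)

lemma meas_RN (N : ℕ) : Measurable (RN N) := by
  unfold RN
  apply Measurable.ite (measurableSet_eq_fun measurable_id measurable_const) measurable_const
  apply Measurable.sub
  · fun_prop
  · exact (measurable_from_top (f := fun z : ℤ => (z : ℝ))).comp (meas_floor N)

lemma meas_RN_iter (N k : ℕ) : Measurable ((RN N)^[k]) := (meas_RN N).iterate k

lemma brn_mem {N : ℕ} (hN : 2 ≤ N) (i : ℕ) {y : ℝ} (hy : y ∈ Icc (0:ℝ) 1) :
    brn N i y ∈ Icc (0:ℝ) 1 := by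
  have h2 := castN hN
  have hi : (0:ℝ) ≤ i := Nat.cast_nonneg i
  have hp : 0 < (N:ℝ) + i + y := by linarith [hy.1]
  unfold brn
  constructor
  · have : (N:ℝ) / (N + i + y) ≤ 1 := by rw [div_le_one hp]; linarith [hy.1]
    linarith
  · have : 0 ≤ (N:ℝ) / (N + i + y) := by positivity
    linarith

lemma brn_lt {N : ℕ} (hN : 2 ≤ N) (i : ℕ) {y : ℝ} (hy : y ∈ Icc (0:ℝ) 1) :
    brn N i y < 1 := by
  have h2 := castN hN
  have hi : (0:ℝ) ≤ i := Nat.cast_nonneg i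
  have hp : 0 < (N:ℝ) + i + y := by linarith [hy.1]
  unfold brn
  have : 0 < (N:ℝ) / (N + i + y) := by positivity
  linarith

lemma div_brn {N : ℕ} (hN : 2 ≤ N) (i : ℕ) {y : ℝ} (hy : y ∈ Icc (0:ℝ) 1) :
    (N:ℝ) / (1 - brn N i y) = N + i + y := by
  have h2 := castN hN
  have hi : (0:ℝ) ≤ i := Nat.cast_nonneg i
  have hp : 0 < (N:ℝ) + i + y := by linarith [hy.1]
  unfold brn
  have : (N:ℝ) ≠ 0 := by linarith
  rw [sub_sub_cancel, div_div_cancel₀ this]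

lemma floor_brn {N : ℕ} (hN : 2 ≤ N) (i : ℕ) {y : ℝ} (hy : y ∈ Ico (0:ℝ) 1) :
    ⌊(N:ℝ) / (1 - brn N i y)⌋ = (N : ℤ) + i := by
  rw [div_brn hN i ⟨hy.1, hy.2.le⟩, Int.floor_eq_iff]
  push_cast
  constructor <;> linarith [hy.1, hy.2]

lemma RN_brn {N : ℕ} (hN : 2 ≤ N) (i : ℕ) {y : ℝ} (hy : y ∈ Ico (0:ℝ) 1) :
    RN N (brn N i y) = y := by
  have h1 := brn_lt hN i ⟨hy.1, hy.2.le⟩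
  rw [RN, if_neg h1.ne, floor_brn hN i hy, div_brn hN i ⟨hy.1, hy.2.le⟩]
  push_cast
  ring

lemma RN_mem (N : ℕ) (x : ℝ) : RN N x ∈ Ico (0:ℝ) 1 := by
  unfold RN
  split_ifs
  · simp
  · exact ⟨Int.fract_nonneg _, Int.fract_lt_one _⟩

lemma floor_ge {N : ℕ} (hN : 2 ≤ N) {x : ℝ} (hx : x ∈ Ico (0:ℝ) 1) :
    (N:ℤ) ≤ ⌊(N:ℝ) / (1 - x)⌋ := by
  have h2 := castN hN
  rw [Int.le_floor, le_div_iff₀ (by linarith [hx.2])]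
  push_cast
  nlinarith [hx.1]

lemma exists_dg {N : ℕ} (hN : 2 ≤ N) {x : ℝ} (hx : x ∈ Ico (0:ℝ) 1) : ∃ i, x ∈ dg N i := by
  obtain ⟨i, hi⟩ := Int.le.dest (floor_ge hN hx)
  exact ⟨i, hi.symm⟩

lemma brn_RN {N : ℕ} (hN : 2 ≤ N) (i : ℕ) {x : ℝ} (hx : x ∈ Ico (0:ℝ) 1) (hd : x ∈ dg N i) :
    brn N i (RN N x) = x := by
  have h2 := castN hN
  have hd' : ⌊(N:ℝ) / (1 - x)⌋ = (N : ℤ) + i := hd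
  rw [RN, if_neg hx.2.ne, hd', brn]
  push_cast
  have : (N:ℝ) + i + (N / (1 - x) - (N + i)) = N / (1 - x) := by ring
  rw [this]
  have : (1 - x) ≠ 0 := by linarith [hx.2]
  have : (N:ℝ) ≠ 0 := by linarith
  field_simp
  ring

lemma image_brn {N : ℕ} (hN : 2 ≤ N) (i : ℕ) (E : Set ℝ) :
    Set.image (brn N i) (Ico 0 1 ∩ E) = Icc 0 1 ∩ (dg N i ∩ RN N ⁻¹' E) := by
  ext x
  constructor
  · rintro ⟨y, ⟨hy, hE⟩, rfl⟩
    refine ⟨brn_mem hN i ⟨hy.1, hy.2.le⟩, floor_brn hN i hy, ?_⟩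
    simpa [RN_brn hN i hy] using hE
  · rintro ⟨hx, hd, hE⟩
    have hx1 : x ≠ 1 := by
      rintro rfl
      have hd' : ⌊(N:ℝ) / (1 - 1)⌋ = (N : ℤ) + i := hd
      simp at hd'
      omega
    have hx' : x ∈ Ico (0:ℝ) 1 := ⟨hx.1, lt_of_le_of_ne hx.2 hx1⟩
    exact ⟨RN N x, ⟨RN_mem N x, hE⟩, brn_RN hN i hx' hd⟩

lemma hasDeriv_brn {N : ℕ} (hN : 2 ≤ N) (i : ℕ) {y : ℝ} (hy : y ∈ Icc (0:ℝ) 1) :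
    HasDerivAt (brn N i) ((N:ℝ) / ((N:ℝ) + i + y) ^ 2) y := by
  have h2 := castN hN
  have hi : (0:ℝ) ≤ i := Nat.cast_nonneg i
  have hp : (N:ℝ) + i + y ≠ 0 := by linarith [hy.1]
  have h := (((hasDerivAt_id y).const_add ((N:ℝ) + i)).fun_inv hp).const_mul (N:ℝ) |>.const_sub 1
  refine (h.congr_deriv ?_)
  simp only [id]
  ring

lemma cov {N : ℕ} (hN : 2 ≤ N) (i : ℕ) {E : Set ℝ} (hE : MeasurableSet E) (g : ℝ → ENNReal) :
    ∫⁻ x in Icc 0 1 ∩ (dg N i ∩ RN N ⁻¹' E), g x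
      = ∫⁻ y in Icc 0 1 ∩ E, ENNReal.ofReal ((N:ℝ) / ((N:ℝ) + i + y) ^ 2) * g (brn N i y) := by
  rw [← image_brn hN, lintegral_image_eq_lintegral_abs_deriv_mul (measurableSet_Ico.inter hE)
    (fun y hy => (hasDeriv_brn hN i ⟨hy.1.1, hy.1.2.le⟩).hasDerivWithinAt)]
  · have : (Ico (0:ℝ) 1 ∩ E : Set ℝ) =ᵐ[volume] (Icc 0 1 ∩ E : Set ℝ) :=
      Ico_ae_eq_Icc.inter (ae_eq_refl E)
    rw [Measure.restrict_congr_set this]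
    apply setLIntegral_congr_fun (measurableSet_Icc.inter hE)
    intro y hy
    have h2 := castN hN
    have hi : (0:ℝ) ≤ i := Nat.cast_nonneg i
    have hp : 0 < (N:ℝ) + i + y := by linarith [hy.1.1]
    simp only
    rw [abs_of_nonneg (by positivity)]
  · intro y hy z hz h
    have := RN_brn hN i hy.1
    rw [← this, h, RN_brn hN i hz.1]

lemma rhoT_apply (N : ℕ) (t : ℝ) {X : Set ℝ} (hX : MeasurableSet X) :
    rhoT N t X = ∫⁻ x in Icc 0 1 ∩ X, ENNReal.ofReal (dT N t x) := by
  rw [rhoT, withDensity_apply _ hX, Measure.restrict_restrict hX, inter_comm]; rfl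

lemma rhoN_apply (N : ℕ) {X : Set ℝ} (hX : MeasurableSet X) :
    rhoN N X = ∫⁻ x in Icc 0 1 ∩ X, ENNReal.ofReal (dN N x) := by
  rw [rhoN, withDensity_apply _ hX, Measure.restrict_restrict hX, inter_comm]; rfl

lemma meas_dT (N : ℕ) : Measurable (fun p : ℝ × ℝ => dT N p.1 p.2) := by
  unfold dT; fun_prop

lemma meas_dN (N : ℕ) : Measurable (dN N) := by
  unfold dN; fun_prop

/-- denominators -/
lemma den_ge {N : ℕ} (hN : 2 ≤ N) {t x : ℝ} (ht : t ∈ Icc (0:ℝ) 1) (hx : x ∈ Icc (0:ℝ) 1) :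
    1 ≤ (N : ℝ) - (1 - x) * (1 - t) := by
  have h2 := castN hN
  nlinarith [ht.1, ht.2, hx.1, hx.2, mul_nonneg hx.1 (sub_nonneg.2 ht.2)]

lemma den_le {N : ℕ} {t x : ℝ} (ht : t ∈ Icc (0:ℝ) 1) (hx : x ∈ Icc (0:ℝ) 1) :
    (N : ℝ) - (1 - x) * (1 - t) ≤ N := by
  have := mul_nonneg (sub_nonneg.2 hx.2) (sub_nonneg.2 ht.2)
  linarith

lemma dT_nonneg {N : ℕ} (hN : 2 ≤ N) {t x : ℝ} (ht : t ∈ Icc (0:ℝ) 1) :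
    0 ≤ dT N t x := by
  have h2 := castN hN
  unfold dT
  have : 0 ≤ (N:ℝ) - 1 + t := by linarith [ht.1]
  positivity

lemma logc_pos {N : ℕ} (hN : 2 ≤ N) : 0 < Real.log ((N : ℝ) / ((N : ℝ) - 1)) := by
  have h2 := castN hN
  apply Real.log_pos
  rw [lt_div_iff₀ (by linarith)]
  linarith

lemma dN_pos {N : ℕ} (hN : 2 ≤ N) {x : ℝ} (hx : x ∈ Icc (0:ℝ) 1) : 0 < dN N x := by
  have h2 := castN hN
  have := logc_pos hN
  unfold dN
  have : 0 < x + (N:ℝ) - 1 := by linarith [hx.1]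
  positivity

lemma wgt_pos {N : ℕ} (hN : 2 ≤ N) (i : ℕ) {t : ℝ} (ht : t ∈ Icc (0:ℝ) 1) : 0 < wgt N i t := by
  have h2 := castN hN
  have hi : (0:ℝ) ≤ i := Nat.cast_nonneg i
  unfold wgt
  have : 0 < (N:ℝ) - 1 + t := by linarith [ht.1]
  have : 0 < (N:ℝ) + i + t := by linarith [ht.1]
  have : 0 < (N:ℝ) + i + t - 1 := by linarith [ht.1]
  positivity

lemma dT_brn {N : ℕ} (hN : 2 ≤ N) (i : ℕ) {t y : ℝ} (ht : t ∈ Icc (0:ℝ) 1)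
    (hy : y ∈ Icc (0:ℝ) 1) :
    (N:ℝ) / ((N:ℝ) + i + y) ^ 2 * dT N t (brn N i y) = wgt N i t * dT N (brn N i t) y := by
  have h2 := castN hN
  have hi : (0:ℝ) ≤ i := Nat.cast_nonneg i
  have e1 : 0 < (N:ℝ) + i + t := by linarith [ht.1]
  have e2 : 0 < (N:ℝ) + i + t - 1 := by linarith [ht.1]
  have e3 : 0 < (N:ℝ) + i + y := by linarith [hy.1]
  have e4 : 0 < (N:ℝ) + i + t + y - 1 := by linarith [hy.1, ht.1]
  have e5 : (N:ℝ) ≠ 0 := by linarith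
  have f1 : (N:ℝ) - (1 - brn N i y) * (1 - t) = N * (N + i + t + y - 1) / (N + i + y) := by
    unfold brn; field_simp; ring
  have f2 : (N:ℝ) - (1 - y) * (1 - brn N i t) = N * (N + i + t + y - 1) / (N + i + t) := by
    unfold brn; field_simp; ring
  have f3 : (N:ℝ) - 1 + brn N i t = N * (N + i + t - 1) / (N + i + t) := by
    unfold brn; field_simp; ring
  unfold dT wgt
  rw [f1, f2, f3]
  field_simp

lemma dN_brn {N : ℕ} (hN : 2 ≤ N) (i : ℕ) {y : ℝ} (hy : y ∈ Icc (0:ℝ) 1) :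
    (N:ℝ) / ((N:ℝ) + i + y) ^ 2 * dN N (brn N i y) = wgt N i y * dN N y := by
  have h2 := castN hN
  have hi : (0:ℝ) ≤ i := Nat.cast_nonneg i
  have e1 : 0 < (N:ℝ) + i + y := by linarith [hy.1]
  have e2 : 0 < (N:ℝ) + i + y - 1 := by linarith [hy.1]
  have e3 : 0 < y + (N:ℝ) - 1 := by linarith [hy.1]
  have e4 : 0 < (N:ℝ) - 1 + y := by linarith [hy.1]
  have e5 : (N:ℝ) ≠ 0 := by linarith
  have f1 : brn N i y + (N:ℝ) - 1 = N * (N + i + y - 1) / (N + i + y) := by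
    unfold brn; field_simp; ring
  have f2 : y + (N:ℝ) - 1 = N - 1 + y := by ring
  unfold dN wgt
  rw [f1, f2]
  have := (logc_pos hN).ne'
  generalize Real.log ((N : ℝ) / ((N : ℝ) - 1)) = c at *
  field_simp

lemma dN_dT {N : ℕ} (hN : 2 ≤ N) {t x : ℝ} (ht : t ∈ Icc (0:ℝ) 1) (hx : x ∈ Icc (0:ℝ) 1) :
    dN N t * dT N t x = dN N x * dT N x t := by
  have h2 := castN hN
  have e3 : 0 < (N:ℝ) - 1 + t := by linarith [ht.1]
  have e4 : 0 < (N:ℝ) - 1 + x := by linarith [hx.1]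
  have e5 := den_ge hN ht hx
  have f1 : x + (N:ℝ) - 1 = N - 1 + x := by ring
  have f2 : t + (N:ℝ) - 1 = N - 1 + t := by ring
  unfold dN dT
  rw [f1, f2, mul_comm (1 - t)]
  have := (logc_pos hN).ne'
  generalize Real.log ((N : ℝ) / ((N : ℝ) - 1)) = c at *
  have e6 : (N : ℝ) - (1 - x) * (1 - t) ≠ 0 := by linarith
  generalize (N : ℝ) - (1 - x) * (1 - t) = q at *
  field_simp

/-- one-step identity -/
lemma rhoT_step {N : ℕ} (hN : 2 ≤ N) (i : ℕ) {t : ℝ} (ht : t ∈ Icc (0:ℝ) 1) {E : Set ℝ}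
    (hE : MeasurableSet E) :
    rhoT N t (dg N i ∩ RN N ⁻¹' E) = ENNReal.ofReal (wgt N i t) * rhoT N (brn N i t) E := by
  rw [rhoT_apply N t ((meas_dg N i).inter (meas_RN N hE)), cov hN i hE, rhoT_apply N _ hE,
    ← lintegral_const_mul]
  · apply setLIntegral_congr_fun (measurableSet_Icc.inter hE)
    intro y hy
    have h2 := castN hN
    have hi : (0:ℝ) ≤ i := Nat.cast_nonneg i
    have hp : 0 < (N:ℝ) + i + y := by linarith [hy.1.1]
    simp only
    rw [← ENNReal.ofReal_mul (by positivity), ← ENNReal.ofReal_mul (wgt_pos hN i ht).le,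
      dT_brn hN i ht hy.1]
  · exact ((meas_dT N).comp (measurable_const.prodMk measurable_id)).ennreal_ofReal

lemma rhoN_step {N : ℕ} (hN : 2 ≤ N) (i : ℕ) {E : Set ℝ} (hE : MeasurableSet E) :
    rhoN N (dg N i ∩ RN N ⁻¹' E)
      = ∫⁻ y in Icc 0 1 ∩ E, ENNReal.ofReal (wgt N i y) * ENNReal.ofReal (dN N y) := by
  rw [rhoN_apply N ((meas_dg N i).inter (meas_RN N hE)), cov hN i hE]
  apply setLIntegral_congr_fun (measurableSet_Icc.inter hE)
  intro y hy
  have h2 := castN hN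
  have hi : (0:ℝ) ≤ i := Nat.cast_nonneg i
  have hp : 0 < (N:ℝ) + i + y := by linarith [hy.1.1]
  simp only
  rw [← ENNReal.ofReal_mul (by positivity), ← ENNReal.ofReal_mul (wgt_pos hN i hy.1).le,
      dN_brn hN i hy.1]

lemma lint_FTC {f F : ℝ → ℝ} (hF : ∀ x ∈ Icc (0:ℝ) 1, HasDerivAt F (f x) x)
    (hc : ContinuousOn f (Icc 0 1)) (h0 : ∀ x ∈ Icc (0:ℝ) 1, 0 ≤ f x) :
    ∫⁻ x in Icc (0:ℝ) 1, ENNReal.ofReal (f x) = ENNReal.ofReal (F 1 - F 0) := by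
  have hu : uIcc (0:ℝ) 1 = Icc 0 1 := uIcc_of_le zero_le_one
  rw [← ofReal_integral_eq_lintegral_ofReal (hc.integrableOn_compact isCompact_Icc)
    ((ae_restrict_iff' measurableSet_Icc).2 (Eventually.of_forall h0)),
    integral_Icc_eq_integral_Ioc, ← intervalIntegral.integral_of_le zero_le_one,
    intervalIntegral.integral_eq_sub_of_hasDerivAt (by rwa [hu])
      (ContinuousOn.intervalIntegrable (by rwa [hu]))]

lemma rhoT_univ {N : ℕ} (hN : 2 ≤ N) {t : ℝ} (ht : t ∈ Icc (0:ℝ) 1) : rhoT N t univ = 1 := by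
  have h2 := castN hN
  rw [rhoT_apply N t MeasurableSet.univ, inter_univ,
    lint_FTC (F := fun x => (N:ℝ) * x / ((N:ℝ) - (1 - x) * (1 - t)))]
  · have : (N:ℝ) ≠ 0 := by linarith
    simp [this]
  · intro x hx
    have hd := den_ge hN ht hx
    have hd' : (N:ℝ) - (1 - x) * (1 - t) ≠ 0 := by linarith
    have h := ((hasDerivAt_id x).const_mul (N:ℝ)).fun_div
      ((((hasDerivAt_id x).const_sub 1).mul_const (1 - t)).const_sub (N:ℝ)) hd'
    refine h.congr_deriv ?_
    simp only [id, dT]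
    congr 1
    ring
  · unfold dT
    apply ContinuousOn.div (by fun_prop) (by fun_prop)
    intro x hx
    have hd := den_ge hN ht hx
    positivity
  · intro x hx
    exact dT_nonneg hN ht

lemma rhoN_univ {N : ℕ} (hN : 2 ≤ N) : rhoN N univ = 1 := by
  have h2 := castN hN
  have hl := logc_pos hN
  rw [rhoN_apply N MeasurableSet.univ, inter_univ,
    lint_FTC (F := fun x => (Real.log ((N : ℝ) / ((N : ℝ) - 1)))⁻¹ * Real.log (x + (N:ℝ) - 1))]
  · have e : Real.log ((N : ℝ) / ((N : ℝ) - 1)) = Real.log N - Real.log ((N:ℝ) - 1) :=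
      Real.log_div (by linarith) (by linarith)
    have : (1:ℝ) + N - 1 = N := by ring
    rw [this, zero_add, ← mul_sub, ← e, inv_mul_cancel₀ hl.ne']
    simp
  · intro x hx
    have hd : x + (N:ℝ) - 1 ≠ 0 := by linarith [hx.1]
    have h := (((hasDerivAt_id x).add_const (N:ℝ)).sub_const 1).log hd
    refine (h.const_mul _).congr_deriv ?_
    simp only [id, dN]
    ring
  · unfold dN
    apply ContinuousOn.div (by fun_prop) (by fun_prop)
    intro x hx
    linarith [hx.1]
  · intro x hx
    exact (dN_pos hN hx).le


lemma ae_vol (P : Measure ℝ) (hP : P ≪ volume.restrict (Icc (0:ℝ) 1)) :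
    ∀ᵐ x ∂P, x ∈ Ico (0:ℝ) 1 ∧ Irrational x := by
  apply hP.ae_le
  have h1 : ∀ᵐ x ∂(volume.restrict (Icc (0:ℝ) 1)), x ∈ Icc (0:ℝ) 1 :=
    ae_restrict_mem measurableSet_Icc
  have h2 : ∀ᵐ x : ℝ, x ∉ Set.range ((↑) : ℚ → ℝ) :=
    (Set.countable_range _).ae_notMem volume
  filter_upwards [h1, ae_restrict_of_ae h2] with x hx hx2
  refine ⟨⟨hx.1, lt_of_le_of_ne hx.2 ?_⟩, hx2⟩
  rintro rfl
  exact hx2 ⟨1, by simp⟩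

lemma ac_T (N : ℕ) (t : ℝ) : rhoT N t ≪ volume.restrict (Icc (0:ℝ) 1) :=
  withDensity_absolutelyContinuous _ _

lemma ac_N (N : ℕ) : rhoN N ≪ volume.restrict (Icc (0:ℝ) 1) :=
  withDensity_absolutelyContinuous _ _

lemma decomp {N : ℕ} (hN : 2 ≤ N) (P : Measure ℝ) (hP : P ≪ volume.restrict (Icc (0:ℝ) 1))
    {X : Set ℝ} (hX : MeasurableSet X) : P X = ∑' i, P (dg N i ∩ X) := by
  rw [← measure_iUnion]
  · apply measure_congr
    filter_upwards [ae_vol P hP] with x hx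
    obtain ⟨i, hi⟩ := exists_dg hN hx.1
    apply propext
    change x ∈ X ↔ x ∈ ⋃ i, dg N i ∩ X
    simp only [mem_iUnion, mem_inter_iff]
    exact ⟨fun h => ⟨i, hi, h⟩, fun ⟨_, _, h⟩ => h⟩
  · intro i j hij
    rw [Function.onFun, Set.disjoint_left]
    rintro x ⟨hx, _⟩ ⟨hy, _⟩
    have h1 : ⌊(N:ℝ) / (1 - x)⌋ = (N : ℤ) + i := hx
    have h2 : ⌊(N:ℝ) / (1 - x)⌋ = (N : ℤ) + j := hy
    omega
  · intro i
    exact (meas_dg N i).inter hX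

lemma rhoT_pre {N : ℕ} (hN : 2 ≤ N) {t : ℝ} (ht : t ∈ Icc (0:ℝ) 1) {E : Set ℝ}
    (hE : MeasurableSet E) :
    rhoT N t (RN N ⁻¹' E) = ∑' i, ENNReal.ofReal (wgt N i t) * rhoT N (brn N i t) E := by
  rw [decomp hN _ (ac_T N t) (meas_RN N hE)]
  exact tsum_congr fun i => rhoT_step hN i ht hE

lemma tsum_wgt {N : ℕ} (hN : 2 ≤ N) {t : ℝ} (ht : t ∈ Icc (0:ℝ) 1) :
    ∑' i, ENNReal.ofReal (wgt N i t) = 1 := by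
  have := rhoT_pre hN ht MeasurableSet.univ
  rw [preimage_univ, rhoT_univ hN ht] at this
  rw [this]
  exact tsum_congr fun i => by rw [rhoT_univ hN (brn_mem hN i ht), mul_one]

lemma meas_wgt (N i : ℕ) : Measurable (wgt N i) := by
  unfold wgt; fun_prop

lemma rhoN_pre {N : ℕ} (hN : 2 ≤ N) {E : Set ℝ} (hE : MeasurableSet E) :
    rhoN N (RN N ⁻¹' E) = rhoN N E := by
  rw [decomp hN _ (ac_N N) (meas_RN N hE)]
  simp_rw [rhoN_step hN _ hE]
  rw [← lintegral_tsum, rhoN_apply N hE]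
  · apply setLIntegral_congr_fun (measurableSet_Icc.inter hE)
    intro y hy
    simp only
    rw [ENNReal.tsum_mul_right, tsum_wgt hN hy.1, one_mul]
  · intro i
    exact ((meas_wgt N i).ennreal_ofReal.mul (meas_dN N).ennreal_ofReal).aemeasurable

lemma rhoN_pre_iter {N : ℕ} (hN : 2 ≤ N) (k : ℕ) {E : Set ℝ} (hE : MeasurableSet E) :
    rhoN N ((RN N)^[k] ⁻¹' E) = rhoN N E := by
  induction k with
  | zero => rfl
  | succ k ih =>
    rw [Function.iterate_succ, preimage_comp, rhoN_pre hN (meas_RN_iter N k hE), ih]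

lemma mixture {N : ℕ} (hN : 2 ≤ N) {E : Set ℝ} (hE : MeasurableSet E) :
    rhoN N E = ∫⁻ t in Icc (0:ℝ) 1, ENNReal.ofReal (dN N t) * rhoT N t E := by
  have hm : Measurable (fun p : ℝ × ℝ => ENNReal.ofReal (dN N p.1) * ENNReal.ofReal (dT N p.1 p.2)) :=
    ((meas_dN N).comp measurable_fst).ennreal_ofReal.mul (meas_dT N).ennreal_ofReal
  have h1 : ∀ t, ENNReal.ofReal (dN N t) * rhoT N t E
      = ∫⁻ x in Icc 0 1 ∩ E, ENNReal.ofReal (dN N t) * ENNReal.ofReal (dT N t x) := by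
    intro t
    rw [rhoT_apply N t hE, lintegral_const_mul]
    exact ((meas_dT N).comp (measurable_const.prodMk measurable_id)).ennreal_ofReal
  simp_rw [h1]
  rw [lintegral_lintegral_swap hm.aemeasurable, rhoN_apply N hE]
  apply setLIntegral_congr_fun (measurableSet_Icc.inter hE)
  intro x hx
  simp only
  have : ∫⁻ t in Icc (0:ℝ) 1, ENNReal.ofReal (dN N t) * ENNReal.ofReal (dT N t x)
      = ∫⁻ t in Icc (0:ℝ) 1, ENNReal.ofReal (dN N x) * ENNReal.ofReal (dT N x t) := by
    apply setLIntegral_congr_fun measurableSet_Icc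
    intro t ht
    simp only
    rw [← ENNReal.ofReal_mul (dN_pos hN ht).le, ← ENNReal.ofReal_mul (dN_pos hN hx.1).le,
      dN_dT hN ht hx.1]
  have h3 := rhoT_univ hN hx.1
  rw [rhoT_apply N x MeasurableSet.univ, inter_univ] at h3
  rw [this, lintegral_const_mul, h3, mul_one]
  exact ((meas_dT N).comp (measurable_const.prodMk measurable_id)).ennreal_ofReal

lemma dN_total {N : ℕ} (hN : 2 ≤ N) : ∫⁻ t in Icc (0:ℝ) 1, ENNReal.ofReal (dN N t) = 1 := by
  have h3 := rhoN_univ hN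
  rwa [rhoN_apply N MeasurableSet.univ, inter_univ] at h3

/-- comparison of two sets under the mixture -/
lemma mixture_le {N : ℕ} (hN : 2 ≤ N) {E F : Set ℝ} (hE : MeasurableSet E) (hF : MeasurableSet F)
    (c d : ENNReal) (hc : c ≠ ⊤) (hd : d ≠ ⊤)
    (h : ∀ t ∈ Icc (0:ℝ) 1, c * rhoT N t E ≤ d * rhoT N t F) :
    c * rhoN N E ≤ d * rhoN N F := by
  rw [mixture hN hE, mixture hN hF, ← lintegral_const_mul' _ _ hc, ← lintegral_const_mul' _ _ hd]
  apply setLIntegral_mono' measurableSet_Icc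
  intro t ht
  calc _ = ENNReal.ofReal (dN N t) * (c * rhoT N t E) := by ring
    _ ≤ ENNReal.ofReal (dN N t) * (d * rhoT N t F) := mul_le_mul' le_rfl (h t ht)
    _ = _ := by ring

lemma mixture_le_const {N : ℕ} (hN : 2 ≤ N) {E : Set ℝ} (hE : MeasurableSet E) (m : ENNReal)
    (h : ∀ t ∈ Icc (0:ℝ) 1, rhoT N t E ≤ m) : rhoN N E ≤ m := by
  rw [mixture hN hE]
  calc _ ≤ ∫⁻ t in Icc (0:ℝ) 1, ENNReal.ofReal (dN N t) * m := by
        apply setLIntegral_mono' measurableSet_Icc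
        intro t ht
        gcongr
        exact h t ht
    _ = m := by rw [lintegral_mul_const _ (meas_dN N).ennreal_ofReal, dN_total hN, one_mul]

lemma mixture_ge_const {N : ℕ} (hN : 2 ≤ N) {E : Set ℝ} (hE : MeasurableSet E) (m : ENNReal)
    (h : ∀ t ∈ Icc (0:ℝ) 1, m ≤ rhoT N t E) : m ≤ rhoN N E := by
  rw [mixture hN hE]
  calc m = ∫⁻ t in Icc (0:ℝ) 1, ENNReal.ofReal (dN N t) * m := by
        rw [lintegral_mul_const _ (meas_dN N).ennreal_ofReal, dN_total hN, one_mul]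
    _ ≤ _ := by
        apply setLIntegral_mono' measurableSet_Icc
        intro t ht
        gcongr
        exact h t ht

lemma rhoT_le_one {N : ℕ} (hN : 2 ≤ N) {t : ℝ} (ht : t ∈ Icc (0:ℝ) 1) (E : Set ℝ) :
    rhoT N t E ≤ 1 := by
  rw [← rhoT_univ hN ht]; exact measure_mono (subset_univ _)

lemma rhoN_le_one {N : ℕ} (hN : 2 ≤ N) (E : Set ℝ) : rhoN N E ≤ 1 := by
  rw [← rhoN_univ hN]; exact measure_mono (subset_univ _)

/-- Lipschitz dependence on `t` of the densities -/
lemma dT_lip {N : ℕ} (hN : 2 ≤ N) {s t x : ℝ} (hs : s ∈ Icc (0:ℝ) 1) (ht : t ∈ Icc (0:ℝ) 1)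
    (hx : x ∈ Icc (0:ℝ) 1) : dT N s x ≤ dT N t x + 3 * (N:ℝ) ^ 3 * |s - t| := by
  have h2 := castN hN
  have a1 := den_ge hN hs hx
  have a2 := den_ge hN ht hx
  have b1 := den_le (N := N) hs hx
  have b2 := den_le (N := N) ht hx
  have hq : ((N : ℝ) - (1 - x) * (1 - s)) - ((N : ℝ) - (1 - x) * (1 - t)) = (s - t) * (1 - x) := by
    ring
  unfold dT
  set p := (N : ℝ) - (1 - x) * (1 - s)
  set q := (N : ℝ) - (1 - x) * (1 - t)
  have key : (N:ℝ) * ((N:ℝ) - 1 + s) / p ^ 2 - (N:ℝ) * ((N:ℝ) - 1 + t) / q ^ 2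
      = N * ((s - t) * q ^ 2 - (s - t) * ((1 - x) * ((N - 1 + t) * (p + q)))) / (p ^ 2 * q ^ 2) := by
    have e1 : p ≠ 0 := by linarith
    have e2 : q ≠ 0 := by linarith
    rw [div_sub_div _ _ (by positivity) (by positivity)]
    congr 1
    linear_combination (-(N:ℝ) * (N - 1 + t) * (p + q)) * hq
  have hpq : 1 ≤ p ^ 2 * q ^ 2 := by
    have : 1 ≤ p ^ 2 := by nlinarith
    have : 1 ≤ q ^ 2 := by nlinarith
    nlinarith
  have hnum : N * ((s - t) * q ^ 2 - (s - t) * ((1 - x) * ((N - 1 + t) * (p + q))))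
      ≤ 3 * (N:ℝ) ^ 3 * |s - t| := by
    have h1 : (s - t) * q ^ 2 ≤ |s - t| * (N:ℝ) ^ 2 := by
      apply mul_le_mul (le_abs_self _) (by gcongr) (by positivity) (abs_nonneg _)
    have h3 : 0 ≤ (1 - x) * ((N - 1 + t) * (p + q)) :=
      mul_nonneg (by linarith [hx.2]) (mul_nonneg (by linarith [ht.1]) (by linarith))
    have h4 : (1 - x) * ((N - 1 + t) * (p + q)) ≤ 1 * ((N:ℝ) * (2 * N)) := by
      apply mul_le_mul (by linarith [hx.1]) _ (mul_nonneg (by linarith [ht.1]) (by linarith)) (by simp)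
      apply mul_le_mul (by linarith [ht.2]) (by linarith) (by linarith) (by linarith)
    have h5 : -(s - t) * ((1 - x) * ((N - 1 + t) * (p + q))) ≤ |s - t| * (1 * ((N:ℝ) * (2 * N))) := by
      apply mul_le_mul (neg_le_abs _) h4 h3 (abs_nonneg _)
    calc _ ≤ (N:ℝ) * (|s - t| * (N:ℝ) ^ 2 + |s - t| * (1 * ((N:ℝ) * (2 * N)))) := by
          apply mul_le_mul_of_nonneg_left _ (by linarith)
          linarith
      _ = _ := by ring
  have h0 : 0 ≤ 3 * (N:ℝ) ^ 3 * |s - t| := by positivity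
  have : N * ((s - t) * q ^ 2 - (s - t) * ((1 - x) * ((N - 1 + t) * (p + q)))) / (p ^ 2 * q ^ 2)
      ≤ 3 * (N:ℝ) ^ 3 * |s - t| := by
    rw [div_le_iff₀ (by linarith)]
    nlinarith
  linarith

noncomputable def KK (N : ℕ) : ℝ := 3 * (N:ℝ) ^ 4 * Real.log ((N : ℝ) / ((N : ℝ) - 1))

lemma KK_nonneg {N : ℕ} (hN : 2 ≤ N) : 0 ≤ KK N := by
  have := logc_pos hN
  unfold KK
  positivity

lemma dT_lip' {N : ℕ} (hN : 2 ≤ N) {s t x : ℝ} (hs : s ∈ Icc (0:ℝ) 1) (ht : t ∈ Icc (0:ℝ) 1)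
    (hx : x ∈ Icc (0:ℝ) 1) : dT N s x ≤ dT N t x + KK N * |s - t| * dN N x := by
  have h2 := castN hN
  refine (dT_lip hN hs ht hx).trans ?_
  have hl := logc_pos hN
  have hd : 0 < x + (N:ℝ) - 1 := by linarith [hx.1]
  have : 1 ≤ (N:ℝ) / (x + N - 1) := by rw [le_div_iff₀ hd]; linarith [hx.2]
  have e : KK N * |s - t| * dN N x = 3 * (N:ℝ) ^ 3 * |s - t| * ((N:ℝ) / (x + N - 1)) := by
    unfold KK dN
    generalize Real.log ((N : ℝ) / ((N : ℝ) - 1)) = c at *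
    field_simp
  rw [e]
  have h0 : 0 ≤ 3 * (N:ℝ) ^ 3 * |s - t| := by positivity
  nlinarith

lemma rhoT_lip0 {N : ℕ} (hN : 2 ≤ N) {s t : ℝ} (hs : s ∈ Icc (0:ℝ) 1) (ht : t ∈ Icc (0:ℝ) 1)
    {C : Set ℝ} (hC : MeasurableSet C) :
    rhoT N s C ≤ rhoT N t C + ENNReal.ofReal (KK N * |s - t|) * rhoN N C := by
  rw [rhoT_apply N s hC, rhoT_apply N t hC, rhoN_apply N hC,
    ← lintegral_const_mul _ (meas_dN N).ennreal_ofReal, ← lintegral_add_left]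
  · apply setLIntegral_mono' (measurableSet_Icc.inter hC)
    intro x hx
    have hK := KK_nonneg hN
    rw [← ENNReal.ofReal_mul (by positivity), ← ENNReal.ofReal_add (dT_nonneg hN ht)
      (mul_nonneg (by positivity) (dN_pos hN hx.1).le)]
    exact ENNReal.ofReal_le_ofReal (dT_lip' hN hs ht hx.1)
  · exact ((meas_dT N).comp (measurable_const.prodMk measurable_id)).ennreal_ofReal

lemma rhoT_lip0_real {N : ℕ} (hN : 2 ≤ N) {C : Set ℝ} (hC : MeasurableSet C) {s t : ℝ}
    (hs : s ∈ Icc (0:ℝ) 1) (ht : t ∈ Icc (0:ℝ) 1) :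
    |(rhoT N s C).toReal - (rhoT N t C).toReal| ≤ (KK N * (rhoN N C).toReal) * |s - t| := by
  have main : ∀ s ∈ Icc (0:ℝ) 1, ∀ t ∈ Icc (0:ℝ) 1,
      (rhoT N s C).toReal - (rhoT N t C).toReal ≤ (KK N * (rhoN N C).toReal) * |s - t| := by
    intro s hs t ht
    have h := rhoT_lip0 hN hs ht hC
    have hK := KK_nonneg hN
    have ft : rhoT N t C ≠ ⊤ := ne_top_of_le_ne_top ENNReal.one_ne_top (rhoT_le_one hN ht C)
    have fn : rhoN N C ≠ ⊤ := ne_top_of_le_ne_top ENNReal.one_ne_top (rhoN_le_one hN C)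
    have fm : ENNReal.ofReal (KK N * |s - t|) * rhoN N C ≠ ⊤ :=
      ENNReal.mul_ne_top ENNReal.ofReal_ne_top fn
    have h' := ENNReal.toReal_mono (ENNReal.add_ne_top.2 ⟨ft, fm⟩) h
    rw [ENNReal.toReal_add ft fm, ENNReal.toReal_mul, ENNReal.toReal_ofReal (by positivity)] at h'
    linarith
  rw [abs_le]
  have h1 := main s hs t ht
  have h2 := main t ht s hs
  rw [abs_sub_comm t s] at h2
  constructor <;> linarith

noncomputable def GG (N n : ℕ) (t : ℝ) : ℝ := n / ((N : ℝ) + n + t - 1)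

lemma GG_succ {N : ℕ} (hN : 2 ≤ N) (n : ℕ) {t : ℝ} (ht : t ∈ Icc (0:ℝ) 1) :
    GG N (n + 1) t - GG N n t = wgt N n t := by
  have h2 := castN hN
  have hi : (0:ℝ) ≤ n := Nat.cast_nonneg n
  have e1 : (N:ℝ) + n + t ≠ 0 := by linarith [ht.1]
  have e2 : (N:ℝ) + n + t - 1 ≠ 0 := by linarith [ht.1]
  unfold GG wgt
  push_cast
  have e3 : (N:ℝ) + (n + 1) + t - 1 = N + n + t := by ring
  rw [e3, div_sub_div _ _ e1 e2]
  congr 1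
  ring

lemma GG_zero (N : ℕ) (t : ℝ) : GG N 0 t = 0 := by simp [GG]

lemma sum_wgt {N : ℕ} (hN : 2 ≤ N) (n : ℕ) {t : ℝ} (ht : t ∈ Icc (0:ℝ) 1) :
    ∑ i ∈ Finset.range n, wgt N i t = GG N n t := by
  induction n with
  | zero => simp [GG_zero]
  | succ n ih => rw [Finset.sum_range_succ, ih, ← GG_succ hN n ht]; ring

lemma GG_le_one {N : ℕ} (hN : 2 ≤ N) (n : ℕ) {t : ℝ} (ht : t ∈ Icc (0:ℝ) 1) : GG N n t ≤ 1 := by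
  have h2 := castN hN
  have hi : (0:ℝ) ≤ n := Nat.cast_nonneg n
  unfold GG
  rw [div_le_one (by linarith [ht.1])]
  linarith [ht.1]

lemma GG_diff {N : ℕ} (hN : 2 ≤ N) (n : ℕ) {s t : ℝ} (hs : s ∈ Icc (0:ℝ) 1)
    (ht : t ∈ Icc (0:ℝ) 1) :
    |GG N n s - GG N n t| = n / (((N : ℝ) + n + s - 1) * ((N : ℝ) + n + t - 1)) * |s - t| := by
  have h2 := castN hN
  have hi : (0:ℝ) ≤ n := Nat.cast_nonneg n
  have e1 : 0 < (N:ℝ) + n + s - 1 := by linarith [hs.1]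
  have e2 : 0 < (N:ℝ) + n + t - 1 := by linarith [ht.1]
  have : GG N n s - GG N n t
      = -(n / (((N : ℝ) + n + s - 1) * ((N : ℝ) + n + t - 1)) * (s - t)) := by
    unfold GG
    rw [div_sub_div _ _ e1.ne' e2.ne']
    field_simp
    ring
  rw [this, abs_neg, abs_mul, abs_of_nonneg (by positivity)]

lemma GG_quarter {N : ℕ} (hN : 2 ≤ N) (n : ℕ) {s t : ℝ} (hs : s ∈ Icc (0:ℝ) 1)
    (ht : t ∈ Icc (0:ℝ) 1) : |GG N n s - GG N n t| ≤ 1 / 4 * |s - t| := by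
  have h2 := castN hN
  have hi : (0:ℝ) ≤ n := Nat.cast_nonneg n
  have e1 : (n:ℝ) + 1 ≤ (N:ℝ) + n + s - 1 := by linarith [hs.1]
  have e2 : (n:ℝ) + 1 ≤ (N:ℝ) + n + t - 1 := by linarith [ht.1]
  rw [GG_diff hN n hs ht]
  apply mul_le_mul_of_nonneg_right _ (abs_nonneg _)
  rw [div_le_iff₀ (by apply mul_pos <;> linarith)]
  have := mul_le_mul e1 e2 (by linarith) (by linarith)
  nlinarith [sq_nonneg ((n:ℝ) - 1)]

lemma GG_tendsto {N : ℕ} (hN : 2 ≤ N) {s t : ℝ} (hs : s ∈ Icc (0:ℝ) 1)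
    (ht : t ∈ Icc (0:ℝ) 1) : Tendsto (fun n : ℕ => |GG N n s - GG N n t|) atTop (nhds 0) := by
  have h2 := castN hN
  refine squeeze_zero (fun n => abs_nonneg _) (g := fun n : ℕ => 1 / ((n:ℝ) + 1)) ?_
    tendsto_one_div_add_atTop_nhds_zero_nat
  intro n
  have hi : (0:ℝ) ≤ n := Nat.cast_nonneg n
  have e1 : (n:ℝ) + 1 ≤ (N:ℝ) + n + s - 1 := by linarith [hs.1]
  have e2 : (n:ℝ) + 1 ≤ (N:ℝ) + n + t - 1 := by linarith [ht.1]
  rw [GG_diff hN n hs ht]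
  have hst : |s - t| ≤ 1 := by rw [abs_le]; constructor <;> linarith [hs.1, hs.2, ht.1, ht.2]
  have hm := mul_le_mul e1 e2 (by linarith) (by linarith)
  have : n / (((N : ℝ) + n + s - 1) * ((N : ℝ) + n + t - 1)) ≤ 1 / ((n:ℝ) + 1) := by
    rw [div_le_div_iff₀ (by apply mul_pos <;> linarith) (by linarith)]
    nlinarith
  calc _ ≤ 1 / ((n:ℝ) + 1) * 1 := by
        apply mul_le_mul this hst (abs_nonneg _) (by positivity)
    _ = _ := by ring

lemma brn_lip {N : ℕ} (hN : 2 ≤ N) (i : ℕ) {s t : ℝ} (hs : s ∈ Icc (0:ℝ) 1)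
    (ht : t ∈ Icc (0:ℝ) 1) : |brn N i s - brn N i t| ≤ 1 / 2 * |s - t| := by
  have h2 := castN hN
  have hi : (0:ℝ) ≤ i := Nat.cast_nonneg i
  have e1 : (N:ℝ) ≤ (N:ℝ) + i + s := by linarith [hs.1]
  have e2 : (N:ℝ) ≤ (N:ℝ) + i + t := by linarith [ht.1]
  have e3 : 0 < (N:ℝ) + i + s := by linarith
  have e4 : 0 < (N:ℝ) + i + t := by linarith
  have : brn N i s - brn N i t = N / (((N:ℝ) + i + s) * ((N:ℝ) + i + t)) * (s - t) := by
    unfold brn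
    field_simp
    ring
  rw [this, abs_mul, abs_of_nonneg (by positivity)]
  apply mul_le_mul_of_nonneg_right _ (abs_nonneg _)
  rw [div_le_iff₀ (by positivity)]
  have := mul_le_mul e1 e2 (by linarith) (by linarith)
  nlinarith

lemma brn_mono {N : ℕ} (hN : 2 ≤ N) (i : ℕ) {t : ℝ} (ht : t ∈ Icc (0:ℝ) 1) :
    brn N i t ≤ brn N (i + 1) t := by
  have h2 := castN hN
  have hi : (0:ℝ) ≤ i := Nat.cast_nonneg i
  have e4 : 0 < (N:ℝ) + i + t := by linarith [ht.1]
  unfold brn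
  push_cast
  gcongr
  linarith

lemma abel (D c : ℕ → ℝ) (hD : D 0 = 0) (n : ℕ) :
    ∑ i ∈ Finset.range n, (D (i + 1) - D i) * c i
      = D n * c n + ∑ i ∈ Finset.range n, D (i + 1) * (c i - c (i + 1)) := by
  induction n with
  | zero => simp [hD]
  | succ n ih => rw [Finset.sum_range_succ, Finset.sum_range_succ, ih]; ring

/-- contraction of the Lipschitz constant -/
lemma contraction {N : ℕ} (hN : 2 ≤ N) (g : ℝ → ℝ) (L M : ℝ) (hL : 0 ≤ L)
    (hM : ∀ s ∈ Icc (0:ℝ) 1, |g s| ≤ M)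
    (hg : ∀ s ∈ Icc (0:ℝ) 1, ∀ t ∈ Icc (0:ℝ) 1, |g s - g t| ≤ L * |s - t|)
    {s t : ℝ} (hs : s ∈ Icc (0:ℝ) 1) (ht : t ∈ Icc (0:ℝ) 1) {us ut : ℝ}
    (h1 : HasSum (fun i => wgt N i s * g (brn N i s)) us)
    (h2 : HasSum (fun i => wgt N i t * g (brn N i t)) ut) :
    |us - ut| ≤ 3 / 4 * L * |s - t| := by
  have hM0 : 0 ≤ M := (abs_nonneg _).trans (hM s hs)
  have hlim := (h1.sub h2).tendsto_sum_nat.abs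
  have hlim2 : Tendsto (fun n : ℕ => 3 / 4 * L * |s - t| + |GG N n s - GG N n t| * M) atTop
      (nhds (3 / 4 * L * |s - t| + 0 * M)) :=
    ((GG_tendsto hN hs ht).mul_const M).const_add _
  rw [zero_mul, add_zero] at hlim2
  refine le_of_tendsto_of_tendsto' hlim hlim2 fun n => ?_
  set c : ℕ → ℝ := fun i => g (brn N i t)
  set D : ℕ → ℝ := fun i => GG N i s - GG N i t with hD
  have hsplit : ∑ i ∈ Finset.range n, (wgt N i s * g (brn N i s) - wgt N i t * g (brn N i t))
      = ∑ i ∈ Finset.range n, wgt N i s * (g (brn N i s) - g (brn N i t))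
        + ∑ i ∈ Finset.range n, (D (i + 1) - D i) * c i := by
    rw [← Finset.sum_add_distrib]
    apply Finset.sum_congr rfl
    intro i _
    have : D (i + 1) - D i = wgt N i s - wgt N i t := by
      rw [← GG_succ hN i hs, ← GG_succ hN i ht, hD]; ring
    rw [this]
    ring
  rw [hsplit, abel D c (by simp [hD, GG_zero])]
  have A1 : |∑ i ∈ Finset.range n, wgt N i s * (g (brn N i s) - g (brn N i t))|
      ≤ 1 / 2 * L * |s - t| := by
    calc _ ≤ ∑ i ∈ Finset.range n, |wgt N i s * (g (brn N i s) - g (brn N i t))| :=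
          Finset.abs_sum_le_sum_abs _ _
      _ ≤ ∑ i ∈ Finset.range n, wgt N i s * (1 / 2 * L * |s - t|) := by
          apply Finset.sum_le_sum
          intro i _
          rw [abs_mul, abs_of_nonneg (wgt_pos hN i hs).le]
          apply mul_le_mul_of_nonneg_left _ (wgt_pos hN i hs).le
          calc _ ≤ L * |brn N i s - brn N i t| := hg _ (brn_mem hN i hs) _ (brn_mem hN i ht)
            _ ≤ L * (1 / 2 * |s - t|) := by gcongr; exact brn_lip hN i hs ht
            _ = _ := by ring
      _ = GG N n s * (1 / 2 * L * |s - t|) := by rw [← Finset.sum_mul, sum_wgt hN n hs]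
      _ ≤ 1 * (1 / 2 * L * |s - t|) := by
          apply mul_le_mul_of_nonneg_right (GG_le_one hN n hs) (by positivity)
      _ = _ := by ring
  have A2 : |∑ i ∈ Finset.range n, D (i + 1) * (c i - c (i + 1))| ≤ 1 / 4 * L * |s - t| := by
    calc _ ≤ ∑ i ∈ Finset.range n, |D (i + 1) * (c i - c (i + 1))| :=
          Finset.abs_sum_le_sum_abs _ _
      _ ≤ ∑ i ∈ Finset.range n, (1 / 4 * |s - t| * L) * (brn N (i + 1) t - brn N i t) := by
          apply Finset.sum_le_sum
          intro i _
          rw [abs_mul]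
          have k1 := GG_quarter hN (i + 1) hs ht
          have k2 := hg _ (brn_mem hN i ht) _ (brn_mem hN (i + 1) ht)
          rw [abs_sub_comm (brn N i t), abs_of_nonneg (sub_nonneg.2 (brn_mono hN i ht))] at k2
          calc _ ≤ (1 / 4 * |s - t|) * (L * (brn N (i + 1) t - brn N i t)) :=
                mul_le_mul k1 k2 (abs_nonneg _) (by positivity)
            _ = _ := by ring
      _ = (1 / 4 * |s - t| * L) * (brn N n t - brn N 0 t) := by
          rw [← Finset.mul_sum, Finset.sum_range_sub (fun i => brn N i t)]
      _ ≤ (1 / 4 * |s - t| * L) * 1 := by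
          apply mul_le_mul_of_nonneg_left _ (by positivity)
          have := (brn_mem hN n ht).2
          have := (brn_mem hN 0 ht).1
          linarith
      _ = _ := by ring
  have A3 : |D n * c n| ≤ |GG N n s - GG N n t| * M := by
    rw [abs_mul]
    exact mul_le_mul_of_nonneg_left (hM _ (brn_mem hN n ht)) (abs_nonneg _)
  have B1 := abs_add_le (∑ i ∈ Finset.range n, wgt N i s * (g (brn N i s) - g (brn N i t)))
    (D n * c n + ∑ i ∈ Finset.range n, D (i + 1) * (c i - c (i + 1)))
  have B2 := abs_add_le (D n * c n) (∑ i ∈ Finset.range n, D (i + 1) * (c i - c (i + 1)))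
  linarith

lemma ne_top_T {N : ℕ} (hN : 2 ≤ N) {t : ℝ} (ht : t ∈ Icc (0:ℝ) 1) (E : Set ℝ) :
    rhoT N t E ≠ ⊤ := ne_top_of_le_ne_top ENNReal.one_ne_top (rhoT_le_one hN ht E)

lemma ne_top_N {N : ℕ} (hN : 2 ≤ N) (E : Set ℝ) :
    rhoN N E ≠ ⊤ := ne_top_of_le_ne_top ENNReal.one_ne_top (rhoN_le_one hN E)

lemma hasSum_pre {N : ℕ} (hN : 2 ≤ N) {t : ℝ} (ht : t ∈ Icc (0:ℝ) 1) {E : Set ℝ}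
    (hE : MeasurableSet E) :
    HasSum (fun i => wgt N i t * (rhoT N (brn N i t) E).toReal)
      (rhoT N t (RN N ⁻¹' E)).toReal := by
  have h := rhoT_pre hN ht hE
  have hne : ∑' i, ENNReal.ofReal (wgt N i t) * rhoT N (brn N i t) E ≠ ⊤ := by
    rw [← h]; exact ne_top_T hN ht _
  have hs := ENNReal.hasSum_toReal hne
  rw [← ENNReal.tsum_toReal_eq (fun i => ENNReal.ne_top_of_tsum_ne_top hne i), ← h] at hs
  simpa [ENNReal.toReal_mul, ENNReal.toReal_ofReal (wgt_pos hN _ ht).le] using hs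

lemma rhoT_lip {N : ℕ} (hN : 2 ≤ N) {C : Set ℝ} (hC : MeasurableSet C) (n : ℕ) :
    ∀ s ∈ Icc (0:ℝ) 1, ∀ t ∈ Icc (0:ℝ) 1,
    |(rhoT N s ((RN N)^[n] ⁻¹' C)).toReal - (rhoT N t ((RN N)^[n] ⁻¹' C)).toReal|
      ≤ ((3 / 4) ^ n * (KK N * (rhoN N C).toReal)) * |s - t| := by
  induction n with
  | zero =>
    intro s hs t ht
    simpa using rhoT_lip0_real hN hC hs ht
  | succ n ih =>
    intro s hs t ht
    rw [Function.iterate_succ, preimage_comp]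
    have hm := meas_RN_iter N n hC
    have hK := KK_nonneg hN
    have := contraction hN (fun t => (rhoT N t ((RN N)^[n] ⁻¹' C)).toReal)
      ((3 / 4) ^ n * (KK N * (rhoN N C).toReal)) 1 (by positivity) ?_ ih hs ht
      (hasSum_pre hN hs hm) (hasSum_pre hN ht hm)
    · refine this.trans (le_of_eq ?_)
      ring
    · intro s hs
      rw [abs_of_nonneg ENNReal.toReal_nonneg]
      exact ENNReal.toReal_le_of_le_ofReal zero_le_one (by simpa using rhoT_le_one hN hs _)

lemma eps_bound {N : ℕ} (hN : 2 ≤ N) {C : Set ℝ} (hC : MeasurableSet C) (n : ℕ) {s : ℝ}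
    (hs : s ∈ Icc (0:ℝ) 1) :
    |(rhoT N s ((RN N)^[n] ⁻¹' C)).toReal - (rhoN N C).toReal|
      ≤ (3 / 4) ^ n * (KK N * (rhoN N C).toReal) := by
  have hK := KK_nonneg hN
  set E := (RN N)^[n] ⁻¹' C with hE
  have hm : MeasurableSet E := meas_RN_iter N n hC
  set L := (3 / 4) ^ n * (KK N * (rhoN N C).toReal) with hL
  have hL0 : 0 ≤ L := by positivity
  have key : ∀ t ∈ Icc (0:ℝ) 1, |(rhoT N s E).toReal - (rhoT N t E).toReal| ≤ L := by
    intro t ht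
    refine (rhoT_lip hN hC n s hs t ht).trans ?_
    have hst : |s - t| ≤ 1 := by rw [abs_le]; constructor <;> linarith [hs.1, hs.2, ht.1, ht.2]
    exact mul_le_of_le_one_right hL0 hst
  have e : rhoN N C = rhoN N E := (rhoN_pre_iter hN n hC).symm
  have up : rhoN N E ≤ ENNReal.ofReal ((rhoT N s E).toReal + L) := by
    apply mixture_le_const hN hm
    intro t ht
    rw [ENNReal.le_ofReal_iff_toReal_le (ne_top_T hN ht _) (by positivity)]
    linarith [(abs_le.1 (key t ht)).1]
  have lo : ENNReal.ofReal ((rhoT N s E).toReal - L) ≤ rhoN N E := by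
    apply mixture_ge_const hN hm
    intro t ht
    apply ENNReal.ofReal_le_of_le_toReal
    linarith [(abs_le.1 (key t ht)).2]
  rw [ENNReal.le_ofReal_iff_toReal_le (ne_top_N hN _) (by positivity)] at up
  rw [ENNReal.ofReal_le_iff_le_toReal (ne_top_N hN _)] at lo
  rw [e, abs_le]
  constructor <;> linarith

/-- sets determined by the first `k` digits -/
def DD (N k : ℕ) (S : Set (Fin k → ℤ)) : Set ℝ := {y | (fun j : Fin k => digit N j y) ∈ S}

lemma meas_digit (N k : ℕ) : Measurable (digit N k) :=
  (meas_floor N).comp (meas_RN_iter N k)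

lemma meas_DD (N k : ℕ) (S : Set (Fin k → ℤ)) : MeasurableSet (DD N k S) := by
  have : Measurable (fun y => (fun j : Fin k => digit N j y)) :=
    measurable_pi_lambda _ fun j => meas_digit N j
  exact this (Set.to_countable S).measurableSet

lemma DD_succ (N k i : ℕ) (S : Set (Fin (k + 1) → ℤ)) (E : Set ℝ) :
    dg N i ∩ (DD N (k + 1) S ∩ (RN N)^[k + 1] ⁻¹' E)
      = dg N i ∩ RN N ⁻¹' (DD N k {d | Fin.cons ((N:ℤ) + i) d ∈ S} ∩ (RN N)^[k] ⁻¹' E) := by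
  ext y
  have : ∀ (h : y ∈ dg N i), (fun j : Fin (k + 1) => digit N j y)
      = Fin.cons ((N:ℤ) + i) (fun j : Fin k => digit N j (RN N y)) := by
    intro h
    funext j
    refine Fin.cases ?_ (fun j => ?_) j
    · exact h
    · rfl
  constructor
  · rintro ⟨h, h1, h2⟩
    refine ⟨h, ?_, h2⟩
    change (fun j : Fin (k + 1) => digit N j y) ∈ S at h1
    rw [this h] at h1
    exact h1
  · rintro ⟨h, h1, h2⟩
    refine ⟨h, ?_, h2⟩
    change (fun j : Fin (k + 1) => digit N j y) ∈ S
    rw [this h]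
    exact h1

lemma DD_succ' (N k i : ℕ) (S : Set (Fin (k + 1) → ℤ)) :
    dg N i ∩ DD N (k + 1) S
      = dg N i ∩ RN N ⁻¹' (DD N k {d | Fin.cons ((N:ℤ) + i) d ∈ S}) := by
  have := DD_succ N k i S univ
  simpa using this

lemma sandwich_up {N : ℕ} (hN : 2 ≤ N) {E : Set ℝ} (hE : MeasurableSet E) (m : ENNReal)
    (h : ∀ s ∈ Icc (0:ℝ) 1, rhoT N s E ≤ m) (k : ℕ) : ∀ (S : Set (Fin k → ℤ)),
    ∀ t ∈ Icc (0:ℝ) 1, rhoT N t (DD N k S ∩ (RN N)^[k] ⁻¹' E) ≤ m * rhoT N t (DD N k S) := by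
  induction k with
  | zero =>
    intro S t ht
    by_cases hS : (fun j : Fin 0 => (j.elim0 : ℤ)) ∈ S
    · have : DD N 0 S = univ := by
        ext y
        simp only [DD, mem_ofPred_eq, mem_univ, iff_true]
        convert hS
      rw [this, univ_inter, rhoT_univ hN ht, mul_one]
      exact h t ht
    · have : DD N 0 S = ∅ := by
        ext y
        simp only [DD, mem_ofPred_eq, mem_empty_iff_false, iff_false]
        convert hS
      simp [this]
  | succ k ih =>
    intro S t ht
    rw [decomp hN _ (ac_T N t) ((meas_DD N _ S).inter (meas_RN_iter N _ hE)),
      decomp hN _ (ac_T N t) (meas_DD N _ S), ← ENNReal.tsum_mul_left]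
    refine ENNReal.tsum_le_tsum fun i => ?_
    rw [DD_succ, DD_succ', rhoT_step hN i ht ((meas_DD N _ _).inter (meas_RN_iter N _ hE)),
      rhoT_step hN i ht (meas_DD N _ _)]
    calc _ ≤ ENNReal.ofReal (wgt N i t) * (m * _) :=
          mul_le_mul' le_rfl (ih _ _ (brn_mem hN i ht))
      _ = _ := by ring

lemma sandwich_lo {N : ℕ} (hN : 2 ≤ N) {E : Set ℝ} (hE : MeasurableSet E) (m : ENNReal)
    (h : ∀ s ∈ Icc (0:ℝ) 1, m ≤ rhoT N s E) (k : ℕ) : ∀ (S : Set (Fin k → ℤ)),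
    ∀ t ∈ Icc (0:ℝ) 1, m * rhoT N t (DD N k S) ≤ rhoT N t (DD N k S ∩ (RN N)^[k] ⁻¹' E) := by
  induction k with
  | zero =>
    intro S t ht
    by_cases hS : (fun j : Fin 0 => (j.elim0 : ℤ)) ∈ S
    · have : DD N 0 S = univ := by
        ext y
        simp only [DD, mem_ofPred_eq, mem_univ, iff_true]
        convert hS
      rw [this, univ_inter, rhoT_univ hN ht, mul_one]
      exact h t ht
    · have : DD N 0 S = ∅ := by
        ext y
        simp only [DD, mem_ofPred_eq, mem_empty_iff_false, iff_false]
        convert hS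
      simp [this]
  | succ k ih =>
    intro S t ht
    rw [decomp hN _ (ac_T N t) ((meas_DD N _ S).inter (meas_RN_iter N _ hE)),
      decomp hN _ (ac_T N t) (meas_DD N _ S), ← ENNReal.tsum_mul_left]
    refine ENNReal.tsum_le_tsum fun i => ?_
    rw [DD_succ, DD_succ', rhoT_step hN i ht ((meas_DD N _ _).inter (meas_RN_iter N _ hE)),
      rhoT_step hN i ht (meas_DD N _ _)]
    calc _ = ENNReal.ofReal (wgt N i t) * (m * _) := by ring
      _ ≤ _ := mul_le_mul' le_rfl (ih _ _ (brn_mem hN i ht))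

/-- backward orbit along a word -/
noncomputable def uu (N : ℕ) (w : List ℕ) (t : ℝ) : ℝ := w.foldl (fun t i => brn N i t) t

def SS (N : ℕ) (w : List ℕ) : Set (Fin w.length → ℤ) :=
  {d | ∀ j, d j = (N:ℤ) + w.get j}

lemma uu_mem {N : ℕ} (hN : 2 ≤ N) (w : List ℕ) : ∀ {t : ℝ}, t ∈ Icc (0:ℝ) 1 →
    uu N w t ∈ Icc (0:ℝ) 1 := by
  induction w with
  | nil => intro t ht; exact ht
  | cons i w ih => intro t ht; exact ih (brn_mem hN i ht)

lemma word_step {N : ℕ} (hN : 2 ≤ N) (w : List ℕ) : ∀ t ∈ Icc (0:ℝ) 1,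
    ∃ p : ENNReal, p ≠ 0 ∧ ∀ E : Set ℝ, MeasurableSet E →
      rhoT N t (DD N w.length (SS N w) ∩ (RN N)^[w.length] ⁻¹' E) = p * rhoT N (uu N w t) E := by
  induction w with
  | nil =>
    intro t ht
    refine ⟨1, one_ne_zero, fun E hE => ?_⟩
    have : DD N ([] : List ℕ).length (SS N []) = univ := by
      ext y
      simp only [DD, SS, mem_ofPred_eq, mem_univ, iff_true]
      exact fun j => j.elim0
    rw [this, univ_inter, one_mul]
    rfl
  | cons i w ih =>
    intro t ht
    obtain ⟨p, hp, h⟩ := ih _ (brn_mem hN i ht)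
    refine ⟨ENNReal.ofReal (wgt N i t) * p, mul_ne_zero ?_ hp, fun E hE => ?_⟩
    · simpa using wgt_pos hN i ht
    · have hsub : DD N (i :: w).length (SS N (i :: w)) ⊆ dg N i := by
        intro y hy
        exact hy ⟨0, by simp⟩
      have e1 : DD N (i :: w).length (SS N (i :: w)) ∩ (RN N)^[(i :: w).length] ⁻¹' E
          = dg N i ∩ (DD N (w.length + 1) (SS N (i :: w)) ∩ (RN N)^[w.length + 1] ⁻¹' E) := by
        rw [eq_comm]
        apply inter_eq_right.2
        exact inter_subset_left.trans hsub
      have e2 : {d : Fin w.length → ℤ | (Fin.cons ((N:ℤ) + i) d : Fin (w.length + 1) → ℤ) ∈ SS N (i :: w)} = SS N w := by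
        ext d
        simp only [SS, mem_ofPred_eq]
        constructor
        · intro hd j
          exact hd j.succ
        · intro hd j
          refine Fin.cases ?_ (fun j => ?_) j
          · rfl
          · exact hd j
      rw [e1, DD_succ, e2, rhoT_step hN i ht ((meas_DD N _ _).inter (meas_RN_iter N _ hE)), h E hE,
        mul_assoc]
      rfl

lemma approx_word {N : ℕ} (hN : 2 ≤ N) (k : ℕ) : ∀ s ∈ Ico (0:ℝ) 1, ∃ w : List ℕ, w.length = k ∧
    ∀ t ∈ Icc (0:ℝ) 1, |uu N w t - s| ≤ (1 / 2) ^ k := by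
  induction k with
  | zero =>
    intro s hs
    refine ⟨[], rfl, fun t ht => ?_⟩
    change |t - s| ≤ _
    rw [abs_le]
    constructor <;> linarith [hs.1, hs.2, ht.1, ht.2]
  | succ k ih =>
    intro s hs
    have hR := RN_mem N s
    obtain ⟨w, hw, h⟩ := ih (RN N s) hR
    obtain ⟨i, hi⟩ := exists_dg hN hs
    refine ⟨w ++ [i], by simp [hw], fun t ht => ?_⟩
    have e : uu N (w ++ [i]) t = brn N i (uu N w t) := by simp [uu]
    rw [e]
    have hb := brn_RN hN i hs hi
    have hl := brn_lip hN i (uu_mem hN w ht) ⟨hR.1, hR.2.le⟩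
    rw [hb] at hl
    refine hl.trans ?_
    rw [pow_succ]
    linarith [h t ht]

lemma approx_word' {N : ℕ} (hN : 2 ≤ N) {s : ℝ} (hs : s ∈ Icc (0:ℝ) 1) {δ : ℝ} (hδ : 0 < δ) :
    ∃ w : List ℕ, 1 ≤ w.length ∧ ∀ t ∈ Icc (0:ℝ) 1, |uu N w t - s| ≤ δ := by
  obtain ⟨s', hs', hss⟩ : ∃ s' ∈ Ico (0:ℝ) 1, |s' - s| ≤ δ / 2 := by
    rcases lt_or_ge s 1 with h | h
    · exact ⟨s, ⟨hs.1, h⟩, by simp; linarith⟩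
    · have : s = 1 := le_antisymm hs.2 h
      subst this
      refine ⟨max 0 (1 - δ / 2), ⟨le_max_left _ _, max_lt one_pos (by linarith)⟩, ?_⟩
      rw [abs_le]
      constructor
      · linarith [le_max_right 0 (1 - δ / 2)]
      · have : max 0 (1 - δ / 2) ≤ 1 := max_le zero_le_one (by linarith)
        linarith
  obtain ⟨k, hk⟩ := exists_pow_lt_of_lt_one (half_pos hδ) (by norm_num : (1 / 2 : ℝ) < 1)
  obtain ⟨w, hw, h⟩ := approx_word hN (k + 1) s' hs'
  refine ⟨w, by omega, fun t ht => ?_⟩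
  have h1 := h t ht
  have h2 : (1 / 2 : ℝ) ^ (k + 1) ≤ (1 / 2) ^ k := by
    rw [pow_succ]; linarith [pow_pos (by norm_num : (0:ℝ) < 1 / 2) k]
  have h3 := abs_sub_le (uu N w t) s' s
  linarith

lemma A_eq {N : ℕ} (k : ℕ) (S : Set (Fin k → ℤ)) (X : Set ℝ) :
    rhoN N ({y | y ∈ Set.Icc (0 : ℝ) 1 ∧ Irrational y ∧ (fun j : Fin k => digit N j y) ∈ S} ∩ X)
      = rhoN N (DD N k S ∩ X) := by
  apply measure_congr
  filter_upwards [ae_vol _ (ac_N N)] with x hx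
  apply propext
  constructor
  · rintro ⟨⟨_, _, h⟩, hX⟩
    exact ⟨h, hX⟩
  · rintro ⟨h, hX⟩
    exact ⟨⟨⟨hx.1.1, hx.1.2.le⟩, hx.2, h⟩, hX⟩

lemma A_eq' {N : ℕ} (k : ℕ) (S : Set (Fin k → ℤ)) :
    rhoN N {y | y ∈ Set.Icc (0 : ℝ) 1 ∧ Irrational y ∧ (fun j : Fin k => digit N j y) ∈ S}
      = rhoN N (DD N k S) := by
  have := A_eq (N := N) k S univ
  simpa using this

lemma B_eq (N k n : ℕ) (hn : 1 ≤ n) (C : Set ℝ) :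
    (RN N)^[k + n - 1] ⁻¹' C = (RN N)^[k] ⁻¹' ((RN N)^[n - 1] ⁻¹' C) := by
  have : k + n - 1 = (n - 1) + k := by omega
  rw [this, Function.iterate_add, preimage_comp]

def epsSet (N n : ℕ) : Set ℝ := {r : ℝ | ∃ t ∈ Set.Icc (0 : ℝ) 1, ∃ C : Set ℝ, MeasurableSet C ∧
    0 < (rhoN N ((RN N)^[n - 1] ⁻¹' C)).toReal ∧
    r = |(rhoT N t ((RN N)^[n - 1] ⁻¹' C)).toReal
          / (rhoN N ((RN N)^[n - 1] ⁻¹' C)).toReal - 1|}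

def psiSet (N : ℕ) (μ : Measure ℝ) (n : ℕ) : Set ℝ := {r : ℝ | ∃ k : ℕ, 1 ≤ k ∧ ∃ A B : Set ℝ,
    (∃ S : Set (Fin k → ℤ),
      A = {y | y ∈ Set.Icc (0 : ℝ) 1 ∧ Irrational y ∧ (fun j : Fin k => digit N j y) ∈ S}) ∧
    (∃ C : Set ℝ, MeasurableSet C ∧ B = (RN N)^[k + n - 1] ⁻¹' C) ∧
    (μ A).toReal * (μ B).toReal ≠ 0 ∧
    r = |(μ (A ∩ B)).toReal / ((μ A).toReal * (μ B).toReal) - 1|}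

lemma eps_le_pow {N : ℕ} (hN : 2 ≤ N) (n : ℕ) {r : ℝ} (hr : r ∈ epsSet N n) :
    r ≤ (3 / 4) ^ (n - 1) * KK N := by
  obtain ⟨t, ht, C, hC, hpos, rfl⟩ := hr
  have h := eps_bound hN hC (n - 1) ht
  rw [← rhoN_pre_iter hN (n - 1) hC] at h
  set e := (rhoN N ((RN N)^[n - 1] ⁻¹' C)).toReal
  rw [div_sub_one hpos.ne', abs_div, abs_of_pos hpos, div_le_iff₀ hpos]
  linarith

lemma epsSet_ne {N : ℕ} (hN : 2 ≤ N) (n : ℕ) : (epsSet N n).Nonempty :=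
  ⟨_, 0, by simp, univ, MeasurableSet.univ, by simp [rhoN_univ hN], rfl⟩

lemma epsSet_bdd {N : ℕ} (hN : 2 ≤ N) (n : ℕ) : BddAbove (epsSet N n) :=
  ⟨_, fun _ hr => eps_le_pow hN n hr⟩

lemma psiSet_ne {N : ℕ} (hN : 2 ≤ N) (n : ℕ) : (psiSet N (rhoN N) n).Nonempty := by
  refine ⟨_, 1, le_rfl, _, _, ⟨univ, rfl⟩, ⟨univ, MeasurableSet.univ, rfl⟩, ?_, rfl⟩
  rw [A_eq']
  have : DD N 1 univ = univ := by ext; simp [DD]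
  simp [this, rhoN_univ hN]

lemma toReal_sandwich {a x : ENNReal} (ha : a ≠ ⊤) (hx : x ≠ ⊤) {lo hi : ℝ} (hhi : 0 ≤ hi)
    (h1 : ENNReal.ofReal lo * a ≤ x) (h2 : x ≤ ENNReal.ofReal hi * a) :
    lo * a.toReal ≤ x.toReal ∧ x.toReal ≤ hi * a.toReal := by
  constructor
  · have := ENNReal.toReal_mono hx h1
    rw [ENNReal.toReal_mul, ENNReal.toReal_ofReal'] at this
    refine le_trans ?_ this
    exact mul_le_mul_of_nonneg_right (le_max_left _ _) ENNReal.toReal_nonneg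
  · have := ENNReal.toReal_mono (ENNReal.mul_ne_top ENNReal.ofReal_ne_top ha) h2
    rwa [ENNReal.toReal_mul, ENNReal.toReal_ofReal hhi] at this

lemma psi_le {N : ℕ} (hN : 2 ≤ N) {n : ℕ} (hn : 1 ≤ n) {r : ℝ} (hr : r ∈ psiSet N (rhoN N) n) :
    r ≤ eps N n := by
  obtain ⟨k, hk, A, B, ⟨S, rfl⟩, ⟨C, hC, rfl⟩, hne, rfl⟩ := hr
  rw [A_eq', B_eq N k n hn] at hne
  rw [A_eq', A_eq, B_eq N k n hn]
  set E := (RN N)^[n - 1] ⁻¹' C with hEdef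
  have hE : MeasurableSet E := meas_RN_iter N _ hC
  rw [rhoN_pre_iter hN k hE] at hne ⊢
  have ha : 0 < (rhoN N (DD N k S)).toReal :=
    lt_of_le_of_ne ENNReal.toReal_nonneg (left_ne_zero_of_mul hne).symm
  have he : 0 < (rhoN N E).toReal :=
    lt_of_le_of_ne ENNReal.toReal_nonneg (right_ne_zero_of_mul hne).symm
  have key : ∀ t ∈ Icc (0:ℝ) 1, |(rhoT N t E).toReal - (rhoN N E).toReal|
      ≤ eps N n * (rhoN N E).toReal := by
    intro t ht
    have : |(rhoT N t E).toReal / (rhoN N E).toReal - 1| ≤ eps N n :=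
      le_csSup (epsSet_bdd hN n) ⟨t, ht, C, hC, he, rfl⟩
    rwa [div_sub_one he.ne', abs_div, abs_of_pos he, div_le_iff₀ he] at this
  have hT : ∀ t ∈ Icc (0:ℝ) 1, _ := fun t ht => abs_le.1 (key t ht)
  have heps : 0 ≤ eps N n := by
    have := (abs_nonneg _).trans (key 0 (by simp))
    exact nonneg_of_mul_nonneg_left this he
  have hhi : 0 ≤ (1 + eps N n) * (rhoN N E).toReal := by positivity
  have up := mixture_le hN ((meas_DD N k S).inter (meas_RN_iter N k hE)) (meas_DD N k S) 1
    (ENNReal.ofReal ((1 + eps N n) * (rhoN N E).toReal)) ENNReal.one_ne_top ENNReal.ofReal_ne_top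
    (fun t ht => by
      rw [one_mul]
      apply sandwich_up hN hE _ _ k S t ht
      intro s hs
      rw [ENNReal.le_ofReal_iff_toReal_le (ne_top_T hN hs _) hhi]
      linarith [(hT s hs).2])
  have lo := mixture_le hN (meas_DD N k S) ((meas_DD N k S).inter (meas_RN_iter N k hE))
    (ENNReal.ofReal ((1 - eps N n) * (rhoN N E).toReal)) 1 ENNReal.ofReal_ne_top ENNReal.one_ne_top
    (fun t ht => by
      rw [one_mul]
      apply sandwich_lo hN hE _ _ k S t ht
      intro s hs
      apply ENNReal.ofReal_le_of_le_toReal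
      linarith [(hT s hs).1])
  rw [one_mul] at up lo
  obtain ⟨h1, h2⟩ := toReal_sandwich (ne_top_N hN _) (ne_top_N hN _) hhi lo up
  have hp := mul_pos ha he
  rw [div_sub_one hp.ne', abs_div, abs_of_pos hp, div_le_iff₀ hp, abs_le]
  constructor <;> linarith

lemma psiSet_bdd {N : ℕ} (hN : 2 ≤ N) {n : ℕ} (hn : 1 ≤ n) : BddAbove (psiSet N (rhoN N) n) :=
  ⟨_, fun _ hr => psi_le hN hn hr⟩

lemma rhoN_pos_of {N : ℕ} (hN : 2 ≤ N) {X : Set ℝ} (hX : MeasurableSet X) {t : ℝ}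
    (ht : t ∈ Icc (0:ℝ) 1) (h : rhoT N t X ≠ 0) : 0 < (rhoN N X).toReal := by
  refine lt_of_le_of_ne ENNReal.toReal_nonneg fun h0 => h ?_
  have := eps_bound hN hX 0 ht
  rw [← h0] at this
  simp only [Function.iterate_zero, preimage_id, mul_zero, sub_zero] at this
  have h3 : (rhoT N t X).toReal = 0 := abs_eq_zero.1 (le_antisymm this (abs_nonneg _))
  rcases (ENNReal.toReal_eq_zero_iff _).1 h3 with h4 | h4
  · exact h4
  · exact absurd h4 (ne_top_T hN ht _)

lemma eps_le {N : ℕ} (hN : 2 ≤ N) {n : ℕ} (hn : 1 ≤ n) {r : ℝ} (hr : r ∈ epsSet N n) :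
    r ≤ psi N (rhoN N) n := by
  obtain ⟨s, hs, C, hC, he, rfl⟩ := hr
  have hLip := rhoT_lip hN hC (n - 1)
  set E := (RN N)^[n - 1] ⁻¹' C with hEdef
  have hE : MeasurableSet E := meas_RN_iter N _ hC
  have hK := KK_nonneg hN
  set L := (3 / 4) ^ (n - 1) * (KK N * (rhoN N C).toReal) with hLdef
  have hL : 0 ≤ L := by positivity
  apply le_of_forall_pos_le_add
  intro δ hδ
  set e := (rhoN N E).toReal with hedef
  obtain ⟨w, hw, hwt⟩ := approx_word' hN hs (δ := δ * e / (L + 1)) (by positivity)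
  have key : ∀ t ∈ Icc (0:ℝ) 1,
      |(rhoT N (uu N w t) E).toReal - (rhoT N s E).toReal| ≤ δ * e := by
    intro t ht
    refine (hLip _ (uu_mem hN w ht) s hs).trans ?_
    calc L * |uu N w t - s| ≤ (L + 1) * (δ * e / (L + 1)) := by
          apply mul_le_mul (by linarith) (hwt t ht) (abs_nonneg _) (by linarith)
      _ = δ * e := by field_simp
  set D := DD N w.length (SS N w) with hD
  have hDm : MeasurableSet D := meas_DD N _ _
  have hDp : ∀ t ∈ Icc (0:ℝ) 1, rhoT N t D ≠ 0 ∧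
      rhoT N t (D ∩ (RN N)^[w.length] ⁻¹' E) = rhoT N t D * rhoT N (uu N w t) E := by
    intro t ht
    obtain ⟨p, hp, h⟩ := word_step hN w t ht
    have h1 := h univ MeasurableSet.univ
    rw [preimage_univ, inter_univ, rhoT_univ hN (uu_mem hN w ht), mul_one] at h1
    rw [h1, h E hE]
    exact ⟨hp, rfl⟩
  have ha : 0 < (rhoN N D).toReal := rhoN_pos_of hN hDm hs (hDp s hs).1
  have hhi : 0 ≤ (rhoT N s E).toReal + δ * e := by positivity
  have up := mixture_le hN (hDm.inter (meas_RN_iter N w.length hE)) hDm 1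
    (ENNReal.ofReal ((rhoT N s E).toReal + δ * e)) ENNReal.one_ne_top ENNReal.ofReal_ne_top
    (fun t ht => by
      rw [one_mul, (hDp t ht).2, mul_comm]
      refine mul_le_mul' ?_ le_rfl
      rw [ENNReal.le_ofReal_iff_toReal_le (ne_top_T hN (uu_mem hN w ht) _) hhi]
      linarith [(abs_le.1 (key t ht)).2])
  have lo := mixture_le hN hDm (hDm.inter (meas_RN_iter N w.length hE))
    (ENNReal.ofReal ((rhoT N s E).toReal - δ * e)) 1 ENNReal.ofReal_ne_top ENNReal.one_ne_top
    (fun t ht => by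
      rw [one_mul, (hDp t ht).2, mul_comm]
      refine mul_le_mul' le_rfl ?_
      apply ENNReal.ofReal_le_of_le_toReal
      linarith [(abs_le.1 (key t ht)).1])
  rw [one_mul] at up lo
  obtain ⟨h1, h2⟩ := toReal_sandwich (ne_top_N hN _) (ne_top_N hN _) hhi lo up
  have hp := mul_pos ha he
  have hmem : |(rhoN N (D ∩ (RN N)^[w.length] ⁻¹' E)).toReal / ((rhoN N D).toReal * e) - 1|
      ∈ psiSet N (rhoN N) n := by
    refine ⟨w.length, hw, _, _, ⟨SS N w, rfl⟩, ⟨C, hC, rfl⟩, ?_, ?_⟩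
    · rw [A_eq', B_eq N _ n hn, rhoN_pre_iter hN _ hE]
      exact hp.ne'
    · rw [A_eq, A_eq', B_eq N _ n hn, rhoN_pre_iter hN _ hE]
  have hle : _ ≤ psi N (rhoN N) n := le_csSup (psiSet_bdd hN hn) hmem
  set x := (rhoN N (D ∩ (RN N)^[w.length] ⁻¹' E)).toReal
  set a := (rhoN N D).toReal
  set f := (rhoT N s E).toReal
  have hd : |f / e - x / (a * e)| ≤ δ := by
    have : f / e - x / (a * e) = (f * a - x) / (a * e) := by field_simp
    rw [this, abs_div, abs_of_pos hp, div_le_iff₀ hp, abs_le]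
    constructor <;> linarith
  have h3 := abs_sub_le (f / e) (x / (a * e)) 1
  linarith

lemma psi_eq_eps {N : ℕ} (hN : 2 ≤ N) {n : ℕ} (hn : 1 ≤ n) : psi N (rhoN N) n = eps N n :=
  le_antisymm (csSup_le (psiSet_ne hN n) fun _ hr => psi_le hN hn hr)
    (csSup_le (epsSet_ne hN n) fun _ hr => eps_le hN hn hr)

theorem stmt19 (N : ℕ) (hN : 2 ≤ N) (n : ℕ) (hn : 1 ≤ n) :
    psi N (rhoN N) n = eps N n ∧
    Filter.Tendsto (fun m => psi N (rhoN N) m) Filter.atTop (nhds 0) := by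
  refine ⟨psi_eq_eps hN hn, ?_⟩
  rw [← tendsto_add_atTop_iff_nat 1]
  have hlim : Tendsto (fun m : ℕ => (3 / 4 : ℝ) ^ m * KK N) atTop (nhds 0) := by
    have := (tendsto_pow_atTop_nhds_zero_of_lt_one (r := (3 / 4 : ℝ)) (by norm_num)
      (by norm_num)).mul_const (KK N)
    rwa [zero_mul] at this
  refine squeeze_zero (fun m => ?_) (fun m => ?_) hlim
  · apply Real.sSup_nonneg
    rintro r ⟨k, _, A, B, _, _, _, rfl⟩
    exact abs_nonneg _
  · rw [psi_eq_eps hN (Nat.le_add_left 1 m)]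
    exact csSup_le (epsSet_ne hN _) fun _ hr => eps_le_pow hN (m + 1) hr
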